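/- arXiv:2110.07551 — 3 statements merged into one kernel-verified Lean document; each statement's English description precedes it below -/
import Mathlib

section
/- Let E be a real inner product space of finite dimension n ≥ 3, let Q be a symmetric bilinear form on E, let R denote the trace of Q with respect to the inner product, and let K ∈ ℝ. If R < n(n−1)K, then there exists a unit vector v ∈ E such that Q(v,v) < (n−1)K and R − 2Q(v,v) < (n−1)(n−2)K. -/
open scoped BigOperators

/-! A continuous function on a connected set attains its average over finitely many points of that
set. Applied to `v ↦ Q v v` on the unit sphere and the vectors of an orthonormal basis, this gives a
unit vector `v` with `n * Q v v = R`. The hypothesis on `R` then says `Q v v < (n - 1) * K`, and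
since `R - 2 * Q v v = (n - 2) * Q v v` with `n - 2 > 0`, it gives the second inequality too. -/

section Average

variable {α ι : Type*} [AddCommMonoid α] [LinearOrder α] [IsOrderedCancelAddMonoid α]
  [Module ℚ≥0 α] [PosSMulStrictMono ℚ≥0 α] [TopologicalSpace α] [OrderClosedTopology α]

theorem exists_mem_eq_expect_of_isPreconnected {X : Type*} [TopologicalSpace X]
    {s : Set X} (hs : IsPreconnected s) {f : X → α} (hf : ContinuousOn f s)
    {t : Finset ι} (ht : t.Nonempty) {x : ι → X} (hx : ∀ i ∈ t, x i ∈ s) :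
    ∃ y ∈ s, f y = 𝔼 i ∈ t, f (x i) := by
  obtain ⟨i, hi, hfi⟩ := Finset.exists_le_of_expect_le ht (le_refl (𝔼 i ∈ t, f (x i)))
  obtain ⟨j, hj, hfj⟩ := Finset.exists_le_of_le_expect ht (le_refl (𝔼 i ∈ t, f (x i)))
  exact hs.intermediate_value (hx i hi) (hx j hj) hf ⟨hfi, hfj⟩

theorem exists_unit_vector_eq_expect {E : Type*} [NormedAddCommGroup E] [NormedSpace ℝ E]
    (hE : 1 < Module.rank ℝ E) {f : E → α} (hf : ContinuousOn f (Metric.sphere 0 1))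
    {t : Finset ι} (ht : t.Nonempty) {e : ι → E} (he : ∀ i ∈ t, ‖e i‖ = 1) :
    ∃ v : E, ‖v‖ = 1 ∧ f v = 𝔼 i ∈ t, f (e i) := by
  obtain ⟨v, hv, hfv⟩ := exists_mem_eq_expect_of_isPreconnected (isPreconnected_sphere hE 0 1) hf ht
    fun i hi ↦ mem_sphere_zero_iff_norm.mpr (he i hi)
  exact ⟨v, mem_sphere_zero_iff_norm.mp hv, hfv⟩

end Average

theorem continuous_bilinear_apply_self {𝕜 E F : Type*} [NontriviallyNormedField 𝕜] [CompleteSpace 𝕜]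
    [NormedAddCommGroup E] [NormedSpace 𝕜 E] [FiniteDimensional 𝕜 E]
    [SeminormedAddCommGroup F] [NormedSpace 𝕜 F] (B : E →ₗ[𝕜] E →ₗ[𝕜] F) :
    Continuous fun v ↦ B v v := by
  simp_rw [← B.toContinuousBilinearMap_apply]
  fun_prop

theorem exists_unit_vector_of_trace_lt_general {E : Type*} [NormedAddCommGroup E] [NormedSpace ℝ E]
    (hE : 1 < Module.rank ℝ E) {n : ℕ} (hn : 3 ≤ n)
    {f : E → ℝ} (hf : ContinuousOn f (Metric.sphere 0 1))
    {e : Fin n → E} (he : ∀ i, ‖e i‖ = 1)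
    (R K : ℝ) (hR : R = ∑ i, f (e i)) (hRK : R < (n : ℝ) * ((n : ℝ) - 1) * K) :
    ∃ v : E, ‖v‖ = 1 ∧ f v < ((n : ℝ) - 1) * K ∧
      R - 2 * f v < ((n : ℝ) - 1) * ((n : ℝ) - 2) * K := by
  obtain ⟨v, hv, hfv⟩ := exists_unit_vector_eq_expect hE hf
    (Finset.univ_nonempty_iff.mpr ⟨⟨0, by lia⟩⟩) fun i _ ↦ he i
  have hRv : n * f v = R := by
    rw [hfv, hR, ← Finset.card_mul_expect, Finset.card_fin]
  have hlt : f v < ((n : ℝ) - 1) * K := by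
    rw [← hRv, mul_assoc] at hRK
    exact lt_of_mul_lt_mul_left hRK n.cast_nonneg
  have hn_sub : (0 : ℝ) < n - 2 := sub_pos.mpr (mod_cast hn)
  refine ⟨v, hv, hlt, ?_⟩
  calc R - 2 * f v = ((n : ℝ) - 2) * f v := by rw [← hRv]; ring
    _ < ((n : ℝ) - 2) * (((n : ℝ) - 1) * K) := mul_lt_mul_of_pos_left hlt hn_sub
    _ = ((n : ℝ) - 1) * ((n : ℝ) - 2) * K := by ring

/-- Let `E` be a real inner product space of finite dimension `n ≥ 3`, let `Q` be a
symmetric bilinear form on `E`, and let `R` be the trace of `Q` with respect to the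
inner product (computed in an orthonormal basis `b`).  If `R < n(n-1)K`, then there is a
unit vector `v` with `Q(v,v) < (n-1)K` and `R - 2 Q(v,v) < (n-1)(n-2)K`. -/
theorem exists_unit_vector_of_trace_lt
    {E : Type*} [NormedAddCommGroup E] [InnerProductSpace ℝ E] [FiniteDimensional ℝ E]
    {n : ℕ} (hn : 3 ≤ n) (hdim : Module.finrank ℝ E = n)
    (Q : E →ₗ[ℝ] E →ₗ[ℝ] ℝ) (hQsymm : ∀ x y, Q x y = Q y x)
    (b : OrthonormalBasis (Fin n) ℝ E)
    (R K : ℝ) (hR : R = ∑ i : Fin n, Q (b i) (b i))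
    (hRK : R < (n : ℝ) * ((n : ℝ) - 1) * K) :
    ∃ v : E, ‖v‖ = 1 ∧ Q v v < ((n : ℝ) - 1) * K ∧
      R - 2 * Q v v < ((n : ℝ) - 1) * ((n : ℝ) - 2) * K :=
  exists_unit_vector_of_trace_lt_general (Module.lt_rank_of_lt_finrank (by lia)) hn
    (continuous_bilinear_apply_self Q).continuousOn b.norm_eq_one R K hR hRK
end

section
/- Let E be a real inner product space of finite dimension n ≥ 2, and let R : E × E × E × E → ℝ be a multilinear map satisfying the curvature symmetries R(x,y,z,w) = −R(y,x,z,w) and R(x,y,z,w) = R(z,w,x,y). Suppose R has nonnegative sectional curvature, i.e. R(x,y,x,y) ≥ 0 for all x, y ∈ E. Define, for an orthonormal basis (e₁, …, e_n), Ric(x,z) = Σ_k R(x, e_k, z, e_k), Scal = Σ_i Ric(e_i, e_i), and |Ric|² = Σ_{i,j} Ric(e_i, e_j)². Then Scal² − 2|Ric|² ≥ 0. -/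
open scoped BigOperators

/-!
Nonnegative sectional curvature enters only through the two Ricci bounds `0 ≤ Ric` and
`2 Ric ≤ Scal ⟨·,·⟩`. For a unit vector `u`, the sum of the sectional curvatures of the coordinate
planes of `uᗮ`, each counted twice, is `Scal - 2 Ric(u, u)`; this gives the second bound. Both `Ric`
and `Scal ⟨·,·⟩ - 2 Ric` are then positive semidefinite, and the inner product of two positive
semidefinite forms is nonnegative, that is, `0 ≤ ⟨Ric, Scal ⟨·,·⟩ - 2 Ric⟩ = Scal² - 2 |Ric|²`.
-/

open LinearMap (BilinForm)
open Finset Matrix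
open scoped RealInnerProductSpace

section PositiveSemidefinite

variable {ι E : Type*} [AddCommGroup E] [Module ℝ E] {A B : BilinForm ℝ E}

theorem posSemidef_of_isPosSemidef_bilinForm [Finite ι] (hA : A.IsPosSemidef) (v : ι → E) :
    (Matrix.of fun i j => A (v i) (v j)).PosSemidef := by
  have := Fintype.ofFinite ι
  refine .of_dotProduct_mulVec_nonneg (IsHermitian.ext fun i j => hA.isSymm.eq (v j) (v i))
    fun x => ?_
  have hquad : star x ⬝ᵥ (Matrix.of fun i j => A (v i) (v j)) *ᵥ x =
      A (∑ i, x i • v i) (∑ j, x j • v j) := by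
    simp only [star_trivial, dotProduct, mulVec, of_apply, map_sum, map_smul, LinearMap.sum_apply,
      LinearMap.smul_apply, smul_eq_mul, mul_sum]
    rw [sum_comm]
    exact sum_congr rfl fun j _ => sum_congr rfl fun i _ => by ring
  exact hquad ▸ hA.nonneg _

theorem sum_mul_nonneg_of_isPosSemidef [Fintype ι] (hA : A.IsPosSemidef) (hB : B.IsPosSemidef)
    (v : ι → E) : 0 ≤ ∑ i, ∑ j, A (v i) (v j) * B (v i) (v j) := by
  have hAB := (posSemidef_of_isPosSemidef_bilinForm hA v).hadamard
    (posSemidef_of_isPosSemidef_bilinForm hB v)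
  simpa [dotProduct, mulVec] using hAB.dotProduct_mulVec_nonneg 1

end PositiveSemidefinite

section OrthonormalBasis

variable {ι E : Type*} [Fintype ι] [NormedAddCommGroup E] [InnerProductSpace ℝ E]

theorem two_mul_sum_sq_le_sq_sum_of_two_mul_le {A : BilinForm ℝ E}
    (hA : A.IsPosSemidef) (e : OrthonormalBasis ι ℝ E)
    (hle : ∀ x, 2 * A x x ≤ (∑ i, A (e i) (e i)) * ‖x‖ ^ 2) :
    2 * ∑ i, ∑ j, A (e i) (e j) ^ 2 ≤ (∑ i, A (e i) (e i)) ^ 2 := by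
  classical
  set t := ∑ i, A (e i) (e i) with ht
  have hcompl : BilinForm.IsPosSemidef (t • innerₗ E - (2 : ℝ) • A) :=
    { eq := fun x y => by simp [real_inner_comm, hA.isSymm.eq x y]
      nonneg := fun x => by simpa using hle x }
  have hpairing : ∑ i, ∑ j, A (e i) (e j) * (t • innerₗ E - (2 : ℝ) • A) (e i) (e j) =
      t ^ 2 - 2 * ∑ i, ∑ j, A (e i) (e j) ^ 2 := by
    simp [e.inner_eq_ite, mul_sub, sum_sub_distrib, ← sum_mul, ← ht, mul_sum, sq, mul_left_comm]
  exact sub_nonneg.mp (hpairing ▸ sum_mul_nonneg_of_isPosSemidef hA hcompl e)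

-- `e i - ⟪e i, u⟫ • u` is the projection of `e i` onto `uᗮ`, so the left side is the trace of `B`
-- over `uᗮ`.
theorem sum_apply_self_sub_inner_smul (e : OrthonormalBasis ι ℝ E) (B : BilinForm ℝ E) {u : E}
    (hu : ‖u‖ = 1) :
    ∑ i, B (e i - ⟪e i, u⟫ • u) (e i - ⟪e i, u⟫ • u) = ∑ i, B (e i) (e i) - B u u := by
  have hleft : ∑ i, ⟪e i, u⟫ * B (e i) u = B u u := by
    simpa using congrArg (fun w => B w u) (e.sum_repr' u)
  have hright : ∑ i, ⟪e i, u⟫ * B u (e i) = B u u := by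
    simpa using congrArg (B u) (e.sum_repr' u)
  have hnorm : ∑ i, ⟪e i, u⟫ ^ 2 = 1 := by
    rw [e.sum_sq_inner_right, hu, one_pow]
  calc ∑ i, B (e i - ⟪e i, u⟫ • u) (e i - ⟪e i, u⟫ • u)
      = ∑ i, (B (e i) (e i) - ⟪e i, u⟫ * B (e i) u - ⟪e i, u⟫ * B u (e i)
          + ⟪e i, u⟫ ^ 2 * B u u) := by
        refine sum_congr rfl fun i _ => ?_
        simp only [map_sub, map_smul, LinearMap.sub_apply, LinearMap.smul_apply, smul_eq_mul]
        ring
    _ = ∑ i, B (e i) (e i) - B u u := by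
        rw [sum_add_distrib, sum_sub_distrib, sum_sub_distrib, ← sum_mul, hleft, hright, hnorm]
        ring

end OrthonormalBasis

section JacobiForm

variable {E : Type*} [AddCommGroup E] [Module ℝ E] {R : E →ₗ[ℝ] E →ₗ[ℝ] E →ₗ[ℝ] E →ₗ[ℝ] ℝ}

/-- The bilinear form `(x, z) ↦ R(x, u, z, u)` of the Jacobi operator of `R` in the direction `u`;
its value at `(x, x)` is the unnormalised sectional curvature of the plane spanned by `x`, `u`. -/
def jacobiForm (R : E →ₗ[ℝ] E →ₗ[ℝ] E →ₗ[ℝ] E →ₗ[ℝ] ℝ) (u : E) : BilinForm ℝ E :=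
  (R.flip u).compr₂ (LinearMap.applyₗ u)

theorem jacobiForm_apply (u x z : E) : jacobiForm R u x z = R x u z u := rfl

theorem jacobiForm_isPosSemidef (hpair : ∀ x y z w, R x y z w = R z w x y) {u : E}
    (hsec : ∀ x, 0 ≤ R x u x u) : (jacobiForm R u).IsPosSemidef :=
  { eq := fun x z => hpair x u z u
    nonneg := hsec }

theorem jacobiForm_apply_self_comm (hanti : ∀ x y z w, R x y z w = -R y x z w)
    (hpair : ∀ x y z w, R x y z w = R z w x y) (x y : E) :
    jacobiForm R y x x = jacobiForm R x y y := by
  simp only [jacobiForm_apply]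
  rw [hanti, hpair, hanti, neg_neg]

theorem jacobiForm_self_self (hanti : ∀ x y z w, R x y z w = -R y x z w) (u : E) :
    jacobiForm R u u u = 0 :=
  self_eq_neg.mp (hanti u u u u)

end JacobiForm

section Ricci

variable {ι E : Type*} [Fintype ι] [NormedAddCommGroup E] [InnerProductSpace ℝ E]
  {R : E →ₗ[ℝ] E →ₗ[ℝ] E →ₗ[ℝ] E →ₗ[ℝ] ℝ}

/-- The Ricci form of the curvature form `R`, computed as the sum of its Jacobi forms over the
orthonormal basis `e`. -/
noncomputable def ricciForm (R : E →ₗ[ℝ] E →ₗ[ℝ] E →ₗ[ℝ] E →ₗ[ℝ] ℝ) (e : OrthonormalBasis ι ℝ E) :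
    BilinForm ℝ E :=
  ∑ k, jacobiForm R (e k)

theorem ricciForm_apply (e : OrthonormalBasis ι ℝ E) (x z : E) :
    ricciForm R e x z = ∑ k, R x (e k) z (e k) := by
  simp only [ricciForm, LinearMap.sum_apply, jacobiForm_apply]

theorem ricciForm_isPosSemidef (hpair : ∀ x y z w, R x y z w = R z w x y)
    (hsec : ∀ x y, 0 ≤ R x y x y) (e : OrthonormalBasis ι ℝ E) :
    (ricciForm R e).IsPosSemidef :=
  sum_induction _ BilinForm.IsPosSemidef (fun _ _ => .add) BilinForm.isPosSemidef_zero
    fun k _ => jacobiForm_isPosSemidef hpair fun x => hsec x (e k)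

theorem sum_jacobiForm_sub_inner_smul (e : OrthonormalBasis ι ℝ E) {u : E} (hu : ‖u‖ = 1) (x : E) :
    ∑ j, jacobiForm R (e j - ⟪e j, u⟫ • u) x x = (ricciForm R e - jacobiForm R u) x x := by
  rw [LinearMap.sub_apply, LinearMap.sub_apply, ricciForm_apply]
  exact sum_apply_self_sub_inner_smul e ((R x).flip x) hu

theorem sum_sum_jacobiForm_sub_inner_smul (hanti : ∀ x y z w, R x y z w = -R y x z w)
    (hpair : ∀ x y z w, R x y z w = R z w x y) (e : OrthonormalBasis ι ℝ E) {u : E}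
    (hu : ‖u‖ = 1) :
    ∑ i, ∑ j, jacobiForm R (e j - ⟪e j, u⟫ • u) (e i - ⟪e i, u⟫ • u) (e i - ⟪e i, u⟫ • u) =
      ∑ i, ricciForm R e (e i) (e i) - 2 * ricciForm R e u u := by
  have htrace : ∑ i, jacobiForm R u (e i) (e i) = ricciForm R e u u := by
    simp only [jacobiForm_apply_self_comm hanti hpair _ u, ricciForm, LinearMap.sum_apply]
  simp only [sum_jacobiForm_sub_inner_smul e hu]
  rw [sum_apply_self_sub_inner_smul e _ hu]
  simp only [LinearMap.sub_apply, sum_sub_distrib, htrace, jacobiForm_self_self hanti]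
  ring

theorem two_mul_ricciForm_apply_self_le (hanti : ∀ x y z w, R x y z w = -R y x z w)
    (hpair : ∀ x y z w, R x y z w = R z w x y) (hsec : ∀ x y, 0 ≤ R x y x y)
    (e : OrthonormalBasis ι ℝ E) (x : E) :
    2 * ricciForm R e x x ≤ (∑ i, ricciForm R e (e i) (e i)) * ‖x‖ ^ 2 := by
  obtain rfl | hx := eq_or_ne x 0
  · simp
  obtain ⟨u, hu, hxu⟩ : ∃ u : E, ‖u‖ = 1 ∧ x = ‖x‖ • u :=
    ⟨‖x‖⁻¹ • x, norm_smul_inv_norm hx, (smul_inv_smul₀ (norm_ne_zero_iff.mpr hx) x).symm⟩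
  have hunit : 2 * ricciForm R e u u ≤ ∑ i, ricciForm R e (e i) (e i) := by
    rw [← sub_nonneg, ← sum_sum_jacobiForm_sub_inner_smul hanti hpair e hu]
    exact sum_nonneg fun i _ => sum_nonneg fun j _ => hsec _ _
  calc 2 * ricciForm R e x x = 2 * ricciForm R e u u * ‖x‖ ^ 2 := by
        conv_lhs => rw [hxu]
        simp only [map_smul, LinearMap.smul_apply, smul_eq_mul]
        ring
    _ ≤ (∑ i, ricciForm R e (e i) (e i)) * ‖x‖ ^ 2 := by gcongr

end Ricci

/-- Let `E` be a real inner product space of finite dimension `n ≥ 2`, and let `R` be a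
multilinear 4-form with the curvature symmetries `R(x,y,z,w) = -R(y,x,z,w)` and
`R(x,y,z,w) = R(z,w,x,y)`, having nonnegative sectional curvature
(`R(x,y,x,y) ≥ 0` for all `x`, `y`).  With `Ric(x,z) = ∑ₖ R(x,eₖ,z,eₖ)`,
`Scal = ∑ᵢ Ric(eᵢ,eᵢ)` and `|Ric|² = ∑ᵢⱼ Ric(eᵢ,eⱼ)²` computed in an orthonormal basis
`e`, one has `Scal² - 2 |Ric|² ≥ 0`. -/
theorem scal_sq_sub_two_ric_sq_nonneg_of_nonneg_sectional
    {E : Type*} [NormedAddCommGroup E] [InnerProductSpace ℝ E] [FiniteDimensional ℝ E]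
    {n : ℕ} (hn : 2 ≤ n) (hdim : Module.finrank ℝ E = n)
    (R : E →ₗ[ℝ] E →ₗ[ℝ] E →ₗ[ℝ] E →ₗ[ℝ] ℝ)
    (hanti : ∀ x y z w, R x y z w = - R y x z w)
    (hpair : ∀ x y z w, R x y z w = R z w x y)
    (hsec : ∀ x y : E, 0 ≤ R x y x y)
    (e : OrthonormalBasis (Fin n) ℝ E)
    (Ric : E → E → ℝ) (hRic : ∀ x z, Ric x z = ∑ k : Fin n, R x (e k) z (e k))
    (Scal : ℝ) (hScal : Scal = ∑ i : Fin n, Ric (e i) (e i))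
    (RicNormSq : ℝ)
    (hRicNormSq : RicNormSq = ∑ i : Fin n, ∑ j : Fin n, (Ric (e i) (e j))^2) :
    0 ≤ Scal^2 - 2 * RicNormSq := by
  obtain rfl : Ric = fun x z => ricciForm R e x z := by
    ext x z
    rw [hRic, ricciForm_apply]
  rw [sub_nonneg, hScal, hRicNormSq]
  exact two_mul_sum_sq_le_sq_sum_of_two_mul_le (ricciForm_isPosSemidef hpair hsec e) e
    (two_mul_ricciForm_apply_self_le hanti hpair hsec e)
end

section
/- Let E be a real inner product space of finite dimension n ≥ 4, and let R : E × E × E × E → ℝ be a multilinear map satisfying the curvature symmetries R(x,y,z,w) = −R(y,x,z,w) and R(x,y,z,w) = R(z,w,x,y). Suppose R is 2-nonnegative in the following sense: for every orthonormal basis (f₁, …, f_n) of E, the symmetric real matrix 𝓡 of size C(n,2) × C(n,2), with rows and columns indexed by pairs (j,k) with j < k and entries 𝓡_{(j,k),(l,m)} = R(f_j, f_k, f_l, f_m), has the property that the sum of its two smallest eigenvalues (listed with multiplicity) is nonnegative. Define, for an orthonormal basis (e₁, …, e_n), Ric(x,z) = Σ_k R(x, e_k, z, e_k), Scal = Σ_i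 Ric(e_i, e_i), and |Ric|² = Σ_{i,j} Ric(e_i, e_j)². Then Scal² − 2|Ric|² ≥ 0. -/
open scoped BigOperators

/-!
Write `sec(x, y) = R(x, y, x, y)`. If any two eigenvalues of the curvature operator have nonnegative
sum, so do any two of its diagonal entries, whence `sec(x, y) + sec(x, z) ≥ 0` on orthonormal
triples. In dimension at least four this gives `sec(x, y) ≤ Ric(x, x)` for orthonormal `x, y`,
because the difference is a sum of at least two sectional curvatures of planes through `x`. Summing
this bound over an orthonormal basis, once in `y` and once in `x`, shows `0 ≤ Ric ≤ Scal / 2` as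
quadratic forms. Finally, a symmetric form with `0 ≤ B ≤ c` satisfies `B² ≤ c B` (Cauchy-Schwarz
for `B`), and the trace of this inequality for `B = Ric` and `c = Scal / 2` is the claim.
-/

section PairwiseSums

variable {ι 𝕜 : Type*} [CommRing 𝕜] [LinearOrder 𝕜] [IsStrictOrderedRing 𝕜]
  {s : Finset ι} {x : ι → 𝕜}

theorem sum_mul_nonneg_of_pairwise_add_nonneg {w : ι → 𝕜}
    (hx : (s : Set ι).Pairwise fun i j => 0 ≤ x i + x j)
    (hw : ∀ i ∈ s, 0 ≤ w i) (hw_half : ∀ i ∈ s, 2 * w i ≤ ∑ j ∈ s, w j) :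
    0 ≤ ∑ i ∈ s, w i * x i := by
  classical
  by_cases hneg : ∃ a ∈ s, x a < 0
  · obtain ⟨a, has, ha⟩ := hneg
    have hothers : (∑ i ∈ s.erase a, w i) * -x a ≤ ∑ i ∈ s.erase a, w i * x i := by
      rw [Finset.sum_mul]
      refine Finset.sum_le_sum fun i hi => ?_
      obtain ⟨hia, his⟩ := Finset.mem_erase.1 hi
      exact mul_le_mul_of_nonneg_left (by linarith [hx his has hia]) (hw i his)
    have hhalf := hw_half a has
    rw [← Finset.add_sum_erase _ _ has] at hhalf ⊢
    linarith [mul_nonneg (neg_nonneg.2 ha.le) (sub_nonneg.2 hhalf)]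
  · push Not at hneg
    exact Finset.sum_nonneg fun i hi => mul_nonneg (hw i hi) (hneg i hi)

theorem sum_nonneg_of_pairwise_add_nonneg (hs : 2 ≤ s.card)
    (hx : (s : Set ι).Pairwise fun i j => 0 ≤ x i + x j) : 0 ≤ ∑ i ∈ s, x i := by
  simpa using sum_mul_nonneg_of_pairwise_add_nonneg (w := fun _ => 1) hx (by simp)
    (fun _ _ => by simpa using mod_cast hs)

end PairwiseSums

section HermitianMatrix

variable {ι 𝕜 : Type*} [Fintype ι] [DecidableEq ι] [RCLike 𝕜] {M : Matrix ι ι 𝕜}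

theorem re_diag_eq_sum_norm_sq_mul_eigenvalues (hM : M.IsHermitian) (p : ι) :
    RCLike.re (M p p) = ∑ k, ‖hM.eigenvectorBasis k p‖ ^ 2 * hM.eigenvalues k := by
  conv_lhs => rw [hM.spectral_theorem]
  rw [Unitary.conjStarAlgAut_apply, Matrix.mul_apply, map_sum]
  refine Finset.sum_congr rfl fun k _ => ?_
  rw [Matrix.mul_diagonal, Matrix.star_apply, mul_right_comm, RCLike.star_def, RCLike.mul_conj,
    Function.comp_apply, ← RCLike.ofReal_pow, ← RCLike.ofReal_mul, RCLike.ofReal_re,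
    hM.eigenvectorUnitary_apply]

theorem re_diag_add_re_diag_nonneg_of_eigenvalues (hM : M.IsHermitian)
    (h : Pairwise fun i j => 0 ≤ hM.eigenvalues i + hM.eigenvalues j) {p q : ι} (hpq : p ≠ q) :
    0 ≤ RCLike.re (M p p) + RCLike.re (M q q) := by
  let b := hM.eigenvectorBasis
  have hrow (r : ι) : ∑ k, ‖b k r‖ ^ 2 = 1 := by
    simpa [EuclideanSpace.inner_single_left] using
      b.sum_sq_norm_inner_left (EuclideanSpace.single r (1 : 𝕜))
  have hcol (k : ι) : ‖b k p‖ ^ 2 + ‖b k q‖ ^ 2 ≤ 1 := by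
    have hk : ∑ r, ‖b k r‖ ^ 2 = 1 := by
      rw [← EuclideanSpace.norm_sq_eq, b.norm_eq_one, one_pow]
    rw [← hk, ← Finset.sum_pair (f := fun r => ‖b k r‖ ^ 2) hpq]
    exact Finset.sum_le_univ_sum_of_nonneg fun _ => sq_nonneg _
  simp only [re_diag_eq_sum_norm_sq_mul_eigenvalues hM, ← Finset.sum_add_distrib, ← add_mul]
  refine sum_mul_nonneg_of_pairwise_add_nonneg (h.set_pairwise _) (fun _ _ => by positivity)
    fun k _ => ?_
  rw [Finset.sum_add_distrib, hrow, hrow]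
  linarith [hcol k]

end HermitianMatrix

theorem exists_orthonormalBasis_norm_smul_eq {ι 𝕜 E : Type*} [Fintype ι] [RCLike 𝕜]
    [NormedAddCommGroup E] [InnerProductSpace 𝕜 E] (e : OrthonormalBasis ι 𝕜 E) (i : ι) (x : E) :
    ∃ f : OrthonormalBasis ι 𝕜 E, (‖x‖ : 𝕜) • f i = x := by
  have : FiniteDimensional 𝕜 E := e.toBasis.finiteDimensional_of_finite
  rcases eq_or_ne x 0 with rfl | hx
  · exact ⟨e, by simp⟩
  · have hunit : Orthonormal 𝕜 (({i} : Set ι).domRestrict fun _ => (‖x‖⁻¹ : 𝕜) • x) :=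
      ⟨fun _ => norm_smul_inv_norm hx, fun j k hjk => (hjk (Subsingleton.elim j k)).elim⟩
    obtain ⟨f, hf⟩ := hunit.exists_orthonormalBasis_extension_of_card_eq
      (Module.finrank_eq_card_basis e.toBasis)
    refine ⟨f, ?_⟩
    rw [hf i rfl, smul_inv_smul₀ (by simpa using hx)]

section BilinearForm

open LinearMap (BilinForm)

variable {ι E : Type*} [Fintype ι] [NormedAddCommGroup E] [InnerProductSpace ℝ E]

theorem sum_apply_sq_le_mul_apply_self {B : BilinForm ℝ E} {c : ℝ} (hsymm : B.IsSymm)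
    (hnonneg : ∀ x, 0 ≤ B x x) (hle : ∀ x, B x x ≤ c * ‖x‖ ^ 2)
    (e : OrthonormalBasis ι ℝ E) (x : E) : ∑ j, B x (e j) ^ 2 ≤ c * B x x := by
  let y := ∑ j, B x (e j) • e j
  have hBxy : B x y = ∑ j, B x (e j) ^ 2 := by simp [y, sq]
  have hy : ‖y‖ ^ 2 = ∑ j, B x (e j) ^ 2 := by
    simp [← e.sum_sq_norm_inner_right y, y, e.orthonormal.inner_right_fintype]
  have hcauchy : (‖y‖ ^ 2) ^ 2 ≤ c * B x x * ‖y‖ ^ 2 := by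
    calc (‖y‖ ^ 2) ^ 2 = B x y ^ 2 := by rw [hBxy, hy]
      _ ≤ B x x * B y y :=
          B.apply_sq_le_of_symm hnonneg (LinearMap.BilinForm.isSymm_iff.1 hsymm) x y
      _ ≤ B x x * (c * ‖y‖ ^ 2) := mul_le_mul_of_nonneg_left (hle y) (hnonneg x)
      _ = c * B x x * ‖y‖ ^ 2 := by ring
  rw [← hy]
  rcases (sq_nonneg ‖y‖).eq_or_lt with hy0 | hypos
  · rw [← hy0]
    rcases (hnonneg x).eq_or_lt with hx0 | hxpos
    · rw [← hx0, mul_zero]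
    · exact mul_nonneg (pos_of_mul_pos_left (hxpos.trans_le (hle x)) (sq_nonneg _)).le hxpos.le
  · exact le_of_mul_le_mul_right (by rwa [← sq]) hypos

theorem exists_orthonormalBasis_apply_self_eq (e : OrthonormalBasis ι ℝ E) (i : ι)
    (B : BilinForm ℝ E) (x : E) :
    ∃ f : OrthonormalBasis ι ℝ E, B x x = ‖x‖ ^ 2 * B (f i) (f i) := by
  obtain ⟨f, hf⟩ := exists_orthonormalBasis_norm_smul_eq e i x
  refine ⟨f, ?_⟩
  conv_lhs => rw [← hf]
  simp [sq, mul_assoc]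

variable [FiniteDimensional ℝ E]

/-- The trace of a bilinear form with respect to the inner product, by which the Ricci and scalar
curvatures are defined. Contracting with the canonical tensor avoids choosing an orthonormal
basis. -/
noncomputable def metricTrace : BilinForm ℝ E →ₗ[ℝ] ℝ :=
  LinearMap.applyₗ (InnerProductSpace.canonicalCovariantTensor E) ∘ₗ
    TensorProduct.uncurry (.id ℝ) E E ℝ

theorem metricTrace_eq_sum (e : OrthonormalBasis ι ℝ E) (B : BilinForm ℝ E) :
    metricTrace B = ∑ i, B (e i) (e i) := by
  simp [metricTrace, InnerProductSpace.canonicalCovariantTensor_eq_sum E e]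

theorem sum_sum_apply_sq_le_mul_metricTrace {B : BilinForm ℝ E} {c : ℝ} (hsymm : B.IsSymm)
    (hnonneg : ∀ x, 0 ≤ B x x) (hle : ∀ x, B x x ≤ c * ‖x‖ ^ 2) (e : OrthonormalBasis ι ℝ E) :
    ∑ i, ∑ j, B (e i) (e j) ^ 2 ≤ c * metricTrace B := by
  rw [metricTrace_eq_sum e, Finset.mul_sum]
  exact Finset.sum_le_sum fun i _ => sum_apply_sq_le_mul_apply_self hsymm hnonneg hle e (e i)

end BilinearForm

/-- A 4-linear form with the antisymmetry and pair symmetry of a Riemann curvature tensor,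
without the first Bianchi identity. -/
structure IsCurvatureLike {E : Type*} [AddCommGroup E] [Module ℝ E]
    (R : E →ₗ[ℝ] E →ₗ[ℝ] E →ₗ[ℝ] E →ₗ[ℝ] ℝ) : Prop where
  antisymm : ∀ x y z w, R x y z w = -R y x z w
  pair_symm : ∀ x y z w, R x y z w = R z w x y

/-- The sectional curvature of the plane spanned by orthonormal `x, y`; it is not normalized for
other pairs. -/
def sectionalCurvature {E : Type*} [AddCommGroup E] [Module ℝ E]
    (R : E →ₗ[ℝ] E →ₗ[ℝ] E →ₗ[ℝ] E →ₗ[ℝ] ℝ) (x y : E) : ℝ :=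
  R x y x y

namespace IsCurvatureLike

variable {E : Type*} [AddCommGroup E] [Module ℝ E] {R : E →ₗ[ℝ] E →ₗ[ℝ] E →ₗ[ℝ] E →ₗ[ℝ] ℝ}

theorem sectionalCurvature_self (hR : IsCurvatureLike R) (x : E) : sectionalCurvature R x x = 0 :=
  self_eq_neg.1 (hR.antisymm x x x x)

theorem sectionalCurvature_comm (hR : IsCurvatureLike R) (x y : E) :
    sectionalCurvature R x y = sectionalCurvature R y x := by
  rw [sectionalCurvature, hR.antisymm, hR.pair_symm, hR.antisymm, neg_neg, sectionalCurvature]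

end IsCurvatureLike

section Ricci

variable {ι E : Type*} [Fintype ι] [NormedAddCommGroup E] [InnerProductSpace ℝ E]
  [FiniteDimensional ℝ E] {R : E →ₗ[ℝ] E →ₗ[ℝ] E →ₗ[ℝ] E →ₗ[ℝ] ℝ}

/-- The Ricci form: `ricci R x z` is the trace of `R` over its second and fourth arguments. -/
noncomputable def ricci (R : E →ₗ[ℝ] E →ₗ[ℝ] E →ₗ[ℝ] E →ₗ[ℝ] ℝ) : LinearMap.BilinForm ℝ E :=
  (LinearMap.lflip.toLinearMap ∘ₗ R).compr₂ metricTrace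

/-- The scalar curvature of `R`, the full trace of the Ricci form. -/
noncomputable def scal (R : E →ₗ[ℝ] E →ₗ[ℝ] E →ₗ[ℝ] E →ₗ[ℝ] ℝ) : ℝ :=
  metricTrace (ricci R)

theorem ricci_eq_sum (e : OrthonormalBasis ι ℝ E) (x z : E) :
    ricci R x z = ∑ k, R x (e k) z (e k) :=
  metricTrace_eq_sum e _

theorem ricci_apply_self_eq_sum (e : OrthonormalBasis ι ℝ E) (x : E) :
    ricci R x x = ∑ k, sectionalCurvature R x (e k) :=
  ricci_eq_sum e x x

theorem scal_eq_sum (e : OrthonormalBasis ι ℝ E) : scal R = ∑ i, ricci R (e i) (e i) :=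
  metricTrace_eq_sum e _

theorem ricci_isSymm (hR : IsCurvatureLike R) : (ricci R).IsSymm where
  eq x z := by
    simp only [ricci_eq_sum (stdOrthonormalBasis ℝ E), hR.pair_symm x]

theorem ricci_apply_self_eq_sum_erase [DecidableEq ι] (hR : IsCurvatureLike R)
    (f : OrthonormalBasis ι ℝ E) (i : ι) :
    ricci R (f i) (f i) = ∑ j ∈ Finset.univ.erase i, sectionalCurvature R (f i) (f j) := by
  rw [ricci_apply_self_eq_sum f, ← Finset.add_sum_erase _ _ (Finset.mem_univ i),
    hR.sectionalCurvature_self, zero_add]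

theorem ricci_basis_nonneg_of_sectionalCurvature_le (hR : IsCurvatureLike R)
    (hι : 3 ≤ Fintype.card ι) (f : OrthonormalBasis ι ℝ E) {i : ι}
    (hsec : ∀ j ≠ i, sectionalCurvature R (f i) (f j) ≤ ricci R (f i) (f i)) :
    0 ≤ ricci R (f i) (f i) := by
  classical
  have hle := Finset.sum_le_card_nsmul (Finset.univ.erase i) _ _
    fun j hj => hsec j (Finset.ne_of_mem_erase hj)
  rw [← ricci_apply_self_eq_sum_erase hR, nsmul_eq_mul] at hle
  have hcard : (1 : ℝ) < (Finset.univ.erase i).card := by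
    rw [Finset.card_erase_of_mem (Finset.mem_univ i), Finset.card_univ]
    exact_mod_cast (by lia : 1 < Fintype.card ι - 1)
  refine (mul_nonneg_iff_of_pos_left (sub_pos.2 hcard)).1 ?_
  linarith

theorem two_mul_ricci_basis_le_scal_of_sectionalCurvature_le (hR : IsCurvatureLike R)
    (f : OrthonormalBasis ι ℝ E) {i : ι}
    (hsec : ∀ j ≠ i, sectionalCurvature R (f j) (f i) ≤ ricci R (f j) (f j)) :
    2 * ricci R (f i) (f i) ≤ scal R := by
  classical
  calc 2 * ricci R (f i) (f i)
      = ricci R (f i) (f i) + ∑ j ∈ Finset.univ.erase i, sectionalCurvature R (f j) (f i) := by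
        simp only [hR.sectionalCurvature_comm _ (f i), ← ricci_apply_self_eq_sum_erase hR, two_mul]
    _ ≤ ricci R (f i) (f i) + ∑ j ∈ Finset.univ.erase i, ricci R (f j) (f j) := by
        gcongr with j hj
        exact hsec j (Finset.ne_of_mem_erase hj)
    _ = scal R := by
        rw [scal_eq_sum f]
        exact Finset.add_sum_erase _ (fun j => ricci R (f j) (f j)) (Finset.mem_univ i)

theorem ricci_nonneg_of_forall_sectionalCurvature_le (hR : IsCurvatureLike R)
    (hι : 3 ≤ Fintype.card ι) (e : OrthonormalBasis ι ℝ E)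
    (hsec : ∀ f : OrthonormalBasis ι ℝ E,
      Pairwise fun i j => sectionalCurvature R (f i) (f j) ≤ ricci R (f i) (f i)) (x : E) :
    0 ≤ ricci R x x := by
  obtain ⟨i⟩ : Nonempty ι := Fintype.card_pos_iff.1 (by lia)
  obtain ⟨f, hf⟩ := exists_orthonormalBasis_apply_self_eq e i (ricci R) x
  rw [hf]
  exact mul_nonneg (sq_nonneg _)
    (ricci_basis_nonneg_of_sectionalCurvature_le hR hι f fun j hj => hsec f hj.symm)

theorem ricci_le_half_scal_of_forall_sectionalCurvature_le [Nonempty ι]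
    (hR : IsCurvatureLike R) (e : OrthonormalBasis ι ℝ E)
    (hsec : ∀ f : OrthonormalBasis ι ℝ E,
      Pairwise fun i j => sectionalCurvature R (f i) (f j) ≤ ricci R (f i) (f i)) (x : E) :
    ricci R x x ≤ scal R / 2 * ‖x‖ ^ 2 := by
  obtain ⟨i⟩ := ‹Nonempty ι›
  obtain ⟨f, hf⟩ := exists_orthonormalBasis_apply_self_eq e i (ricci R) x
  rw [hf, mul_comm (scal R / 2)]
  gcongr
  have hhalf := two_mul_ricci_basis_le_scal_of_sectionalCurvature_le hR f (i := i)
    fun j hj => hsec f hj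
  linarith

end Ricci

section CurvatureOperator

variable {ι E : Type*} [LinearOrder ι] [AddCommGroup E] [Module ℝ E]
  {R : E →ₗ[ℝ] E →ₗ[ℝ] E →ₗ[ℝ] E →ₗ[ℝ] ℝ}

/-- The matrix of the curvature operator on `Λ²E` in the family `f j ∧ f k`, indexed by the pairs
`j < k`. -/
def curvatureOperatorMatrix (R : E →ₗ[ℝ] E →ₗ[ℝ] E →ₗ[ℝ] E →ₗ[ℝ] ℝ) (f : ι → E) :
    Matrix {p : ι × ι // p.1 < p.2} {p : ι × ι // p.1 < p.2} ℝ :=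
  .of fun p q => R (f p.1.1) (f p.1.2) (f q.1.1) (f q.1.2)

theorem curvatureOperatorMatrix_isHermitian (hR : IsCurvatureLike R) (f : ι → E) :
    (curvatureOperatorMatrix R f).IsHermitian :=
  Matrix.ext fun _ _ => hR.pair_symm _ _ _ _

theorem sectionalCurvature_add_sectionalCurvature_nonneg [Fintype ι] (hR : IsCurvatureLike R)
    {f : ι → E}
    (htwo : ∀ hM : (curvatureOperatorMatrix R f).IsHermitian,
      Pairwise fun p q => 0 ≤ hM.eigenvalues p + hM.eigenvalues q)
    {a b c d : ι} (hab : a ≠ b) (hcd : c ≠ d) (hne : s(a, b) ≠ s(c, d)) :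
    0 ≤ sectionalCurvature R (f a) (f b) + sectionalCurvature R (f c) (f d) := by
  wlog hab' : a < b generalizing a b
  · rw [hR.sectionalCurvature_comm (f a)]
    exact this hab.symm (Sym2.eq_swap ▸ hne) (hab.lt_or_gt.resolve_left hab')
  wlog hcd' : c < d generalizing c d
  · rw [hR.sectionalCurvature_comm (f c)]
    exact this hcd.symm (Sym2.eq_swap (a := d) ▸ hne) (hcd.lt_or_gt.resolve_left hcd')
  have hM := curvatureOperatorMatrix_isHermitian hR f
  exact re_diag_add_re_diag_nonneg_of_eigenvalues hM (htwo hM)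
    (p := ⟨(a, b), hab'⟩) (q := ⟨(c, d), hcd'⟩) fun h => hne (by simp_all)

end CurvatureOperator

theorem sectionalCurvature_le_ricci {ι E : Type*} [Fintype ι] [LinearOrder ι] [NormedAddCommGroup E]
    [InnerProductSpace ℝ E] [FiniteDimensional ℝ E]
    {R : E →ₗ[ℝ] E →ₗ[ℝ] E →ₗ[ℝ] E →ₗ[ℝ] ℝ} (hR : IsCurvatureLike R) (hι : 4 ≤ Fintype.card ι)
    (f : OrthonormalBasis ι ℝ E)
    (htwo : ∀ hM : (curvatureOperatorMatrix R f).IsHermitian,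
      Pairwise fun p q => 0 ≤ hM.eigenvalues p + hM.eigenvalues q)
    {i j : ι} (hij : i ≠ j) : sectionalCurvature R (f i) (f j) ≤ ricci R (f i) (f i) := by
  have hj : j ∈ Finset.univ.erase i := Finset.mem_erase.2 ⟨hij.symm, Finset.mem_univ j⟩
  rw [ricci_apply_self_eq_sum_erase hR, ← Finset.add_sum_erase _ _ hj, le_add_iff_nonneg_right]
  refine sum_nonneg_of_pairwise_add_nonneg ?_ fun k hk l hl hkl => ?_
  · rw [Finset.card_erase_of_mem hj, Finset.card_erase_of_mem (Finset.mem_univ i),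
      Finset.card_univ]
    lia
  · have hik : i ≠ k := by rintro rfl; simp at hk
    have hil : i ≠ l := by rintro rfl; simp at hl
    exact sectionalCurvature_add_sectionalCurvature_nonneg hR htwo hik hil (by simp [hkl, hil])

theorem scal_sq_sub_two_ric_sq_nonneg_of_two_nonneg_curvature_operator_general
    {ι E : Type*} [Fintype ι] [NormedAddCommGroup E] [InnerProductSpace ℝ E]
    (hι : 3 ≤ Fintype.card ι)
    {R : E →ₗ[ℝ] E →ₗ[ℝ] E →ₗ[ℝ] E →ₗ[ℝ] ℝ} (hR : IsCurvatureLike R)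
    (e : OrthonormalBasis ι ℝ E)
    {Ric : E → E → ℝ} (hRic : ∀ x z, Ric x z = ∑ k, R x (e k) z (e k))
    (hsec : ∀ f : OrthonormalBasis ι ℝ E,
      Pairwise fun i j => sectionalCurvature R (f i) (f j) ≤ Ric (f i) (f i))
    {Scal : ℝ} (hScal : Scal = ∑ i, Ric (e i) (e i))
    {RicNormSq : ℝ} (hRicNormSq : RicNormSq = ∑ i, ∑ j, Ric (e i) (e j) ^ 2) :
    0 ≤ Scal ^ 2 - 2 * RicNormSq := by
  have : FiniteDimensional ℝ E := e.toBasis.finiteDimensional_of_finite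
  simp only [hRic, ← ricci_eq_sum e] at hsec hScal hRicNormSq
  rw [← scal_eq_sum e] at hScal
  have : Nonempty ι := Fintype.card_pos_iff.1 (by lia)
  have hmain := sum_sum_apply_sq_le_mul_metricTrace (ricci_isSymm hR)
    (ricci_nonneg_of_forall_sectionalCurvature_le hR hι e hsec)
    (ricci_le_half_scal_of_forall_sectionalCurvature_le hR e hsec) e
  rw [← hRicNormSq, ← scal, ← hScal] at hmain
  linarith

/-- Let `E` be a real inner product space of finite dimension `n ≥ 4`, and let `R` be a
multilinear 4-form with the curvature symmetries `R(x,y,z,w) = -R(y,x,z,w)` and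
`R(x,y,z,w) = R(z,w,x,y)`.  Suppose `R` is 2-nonnegative: for every orthonormal basis
`f` of `E`, the symmetric matrix indexed by pairs `(j,k)` with `j < k`, with entries
`R(f_j, f_k, f_l, f_m)`, has the sum of (any) two of its eigenvalues-with-multiplicity
nonnegative, i.e. the sum of its two smallest eigenvalues is nonnegative.  Then, with
`Ric(x,z) = ∑ₖ R(x,eₖ,z,eₖ)`, `Scal = ∑ᵢ Ric(eᵢ,eᵢ)` and `|Ric|² = ∑ᵢⱼ Ric(eᵢ,eⱼ)²`
computed in an orthonormal basis `e`, one has `Scal² - 2 |Ric|² ≥ 0`. -/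
theorem scal_sq_sub_two_ric_sq_nonneg_of_two_nonneg_curvature_operator
    {E : Type*} [NormedAddCommGroup E] [InnerProductSpace ℝ E] [FiniteDimensional ℝ E]
    {n : ℕ} (hn : 4 ≤ n) (hdim : Module.finrank ℝ E = n)
    (R : E →ₗ[ℝ] E →ₗ[ℝ] E →ₗ[ℝ] E →ₗ[ℝ] ℝ)
    (hanti : ∀ x y z w, R x y z w = - R y x z w)
    (hpair : ∀ x y z w, R x y z w = R z w x y)
    (h2nn : ∀ (f : OrthonormalBasis (Fin n) ℝ E)
      (hM : (Matrix.of fun p q : {p : Fin n × Fin n // p.1 < p.2} =>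
          R (f p.1.1) (f p.1.2) (f q.1.1) (f q.1.2)).IsHermitian)
      (i j : {p : Fin n × Fin n // p.1 < p.2}), i ≠ j →
        0 ≤ hM.eigenvalues i + hM.eigenvalues j)
    (e : OrthonormalBasis (Fin n) ℝ E)
    (Ric : E → E → ℝ) (hRic : ∀ x z, Ric x z = ∑ k : Fin n, R x (e k) z (e k))
    (Scal : ℝ) (hScal : Scal = ∑ i : Fin n, Ric (e i) (e i))
    (RicNormSq : ℝ)
    (hRicNormSq : RicNormSq = ∑ i : Fin n, ∑ j : Fin n, (Ric (e i) (e j))^2) :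
    0 ≤ Scal^2 - 2 * RicNormSq := by
  have hR : IsCurvatureLike R := ⟨hanti, hpair⟩
  refine scal_sq_sub_two_ric_sq_nonneg_of_two_nonneg_curvature_operator_general
    (by simp; lia) hR e hRic (fun f i j hij => ?_) hScal hRicNormSq
  simpa only [hRic, ricci_eq_sum e] using
    sectionalCurvature_le_ricci hR (by simpa using hn) f (fun hM _ _ => h2nn f hM _ _) hij
end
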